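/- arXiv:2008.09678 — 2 statements merged into one kernel-verified Lean document; each statement's English description precedes it below -/
import Mathlib

section
/- Let (A, d) be a cochain complex of abelian groups indexed by the natural numbers, with differentials d^i : A^i → A^{i+1}. Let (A_f, d_f) be the quotient complex whose i-th term is A^i_f = A^i/T(A^i) with the induced differential, and let π : A → A_f be the degreewise quotient map of complexes. Then for every i, the homomorphism π' : H^i(A)_f → H^i(A_f)_f induced on torsion-free quotients of cohomology by π* : H^i(A) → H^i(A_f) is injective. -/
/-!
Let `x` be a cocycle of `A` whose class dies in `H^i(A_f)_f`. Then `c • π x` is a coboundary of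
`A_f` for some `c ≠ 0`, say the image under `d_f` of `π y`, so `c • x - d y` is torsion in `A^i`
(in degree `0`, `c • x` itself is torsion). Killing it by some `c' ≠ 0` gives
`(c' * c) • x = d (c' • y)`, so the class of `x` is torsion in `H^i(A)`.
`mk_mem_torsion_cohomology_iff` translates between torsion classes and cocycles, and
`exists_smul_mem_cobounds` lifts coboundaries of `A_f` to `A` up to a nonzero multiple.
-/

open Submodule

/-- The cocycles of a cochain complex of abelian groups in degree `i`. -/
abbrev cocycles {A : ℕ → Type} [∀ i, AddCommGroup (A i)]
    (d : ∀ i, A i →ₗ[ℤ] A (i + 1)) (i : ℕ) : Submodule ℤ (A i) :=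
  LinearMap.ker (d i)

/-- The coboundaries of a cochain complex of abelian groups in degree `i`
(the trivial subgroup in degree `0`). -/
def cobounds {A : ℕ → Type} [∀ i, AddCommGroup (A i)]
    (d : ∀ i, A i →ₗ[ℤ] A (i + 1)) : ∀ i, Submodule ℤ (A i)
  | 0 => ⊥
  | (i + 1) => LinearMap.range (d i)

/-- The `i`-th cohomology group of a cochain complex of abelian groups:
cocycles modulo coboundaries. -/
abbrev cohomology {A : ℕ → Type} [∀ i, AddCommGroup (A i)]
    (d : ∀ i, A i →ₗ[ℤ] A (i + 1)) (i : ℕ) : Type :=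
  (cocycles d i) ⧸ (Submodule.comap (cocycles d i).subtype (cobounds d i))

/-- A degreewise map of cochain complexes commuting with the differentials sends
cocycles to cocycles. -/
theorem map_cocycles {A B : ℕ → Type} [∀ i, AddCommGroup (A i)] [∀ i, AddCommGroup (B i)]
    {dA : ∀ i, A i →ₗ[ℤ] A (i + 1)} {dB : ∀ i, B i →ₗ[ℤ] B (i + 1)}
    {f : ∀ i, A i →ₗ[ℤ] B i} (hf : ∀ i, f (i + 1) ∘ₗ dA i = dB i ∘ₗ f i) (i : ℕ) :
    ∀ x ∈ cocycles dA i, f i x ∈ cocycles dB i := by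
  intro x hx
  have h := congrArg (fun g => g x) (hf i)
  simp only [LinearMap.comp_apply] at h
  simp only [cocycles, LinearMap.mem_ker] at hx ⊢
  rw [← h, hx, map_zero]

/-- The map induced on cohomology by a degreewise map of cochain complexes commuting
with the differentials. -/
def cohomologyMap {A B : ℕ → Type} [∀ i, AddCommGroup (A i)] [∀ i, AddCommGroup (B i)]
    (dA : ∀ i, A i →ₗ[ℤ] A (i + 1)) (dB : ∀ i, B i →ₗ[ℤ] B (i + 1))
    (f : ∀ i, A i →ₗ[ℤ] B i) (hf : ∀ i, f (i + 1) ∘ₗ dA i = dB i ∘ₗ f i) (i : ℕ) :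
    cohomology dA i →ₗ[ℤ] cohomology dB i :=
  Submodule.mapQ _ _ ((f i).restrict (map_cocycles hf i)) (by
    intro x hx
    simp only [Submodule.mem_comap, Submodule.subtype_apply,
      LinearMap.restrict_coe_apply] at hx ⊢
    match i with
    | 0 =>
      have hx0 : (x : A 0) = 0 := hx
      simp only [cobounds]
      rw [hx0, map_zero]
      exact Submodule.zero_mem _
    | (j + 1) =>
      obtain ⟨y, hy⟩ := hx
      refine ⟨f j y, ?_⟩
      have h := congrArg (fun g => g y) (hf j)
      simp only [LinearMap.comp_apply] at h
      rw [← h, hy])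

/-- The differentials of the torsion-free quotient complex, characterized by
commuting with the degreewise quotient maps. -/
noncomputable def dtf {A : ℕ → Type} [∀ i, AddCommGroup (A i)]
    (d : ∀ i, A i →ₗ[ℤ] A (i + 1)) (i : ℕ) :
    (A i ⧸ torsion ℤ (A i)) →ₗ[ℤ] (A (i + 1) ⧸ torsion ℤ (A (i + 1))) :=
  Submodule.mapQ _ _ (d i) (by
    intro x hx
    obtain ⟨c, hc⟩ := hx
    refine Submodule.mem_comap.2 ⟨c, ?_⟩
    show (c : ℤ) • (d i) x = 0
    rw [← map_smul]
    have hcx : (c : ℤ) • x = 0 := hc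
    rw [hcx, map_zero])

/-- The degreewise quotient maps `π i : A i → A i / T(A i)` commute with the
differentials of the torsion-free quotient complex. -/
theorem pi_comm {A : ℕ → Type} [∀ i, AddCommGroup (A i)]
    (d : ∀ i, A i →ₗ[ℤ] A (i + 1)) (i : ℕ) :
    (torsion ℤ (A (i + 1))).mkQ ∘ₗ d i = dtf d i ∘ₗ (torsion ℤ (A i)).mkQ := by
  ext x; simp [dtf]

/-- Torsion in cohomology, read off on cocycles: a class is torsion exactly when a nonzero
multiple of a representing cocycle is a coboundary. -/
theorem mk_mem_torsion_cohomology_iff {A : ℕ → Type} [∀ i, AddCommGroup (A i)]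
    (d : ∀ i, A i →ₗ[ℤ] A (i + 1)) (i : ℕ) (x : cocycles d i) :
    (Submodule.Quotient.mk x : cohomology d i) ∈ torsion ℤ (cohomology d i) ↔
      ∃ c : ℤ, c ≠ 0 ∧ c • (x : A i) ∈ cobounds d i := by
  have key (c : ℤ) : c • (Submodule.Quotient.mk x : cohomology d i) = 0 ↔
      c • (x : A i) ∈ cobounds d i := by
    rw [← Submodule.Quotient.mk_smul, Submodule.Quotient.mk_eq_zero]
    rfl
  constructor
  · rintro ⟨c, hc⟩
    exact ⟨c, nonZeroDivisors.coe_ne_zero c, (key c).1 hc⟩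
  · rintro ⟨c, hc, h⟩
    exact ⟨⟨c, mem_nonZeroDivisors_of_ne_zero hc⟩, (key c).2 h⟩

/-- If `x` becomes a coboundary modulo torsion, then `x - d y` is torsion for some `y`, and the
integer killing it turns `x` into a genuine coboundary. -/
theorem exists_smul_mem_cobounds {A : ℕ → Type} [∀ i, AddCommGroup (A i)]
    (d : ∀ i, A i →ₗ[ℤ] A (i + 1)) (i : ℕ) (x : A i)
    (hx : (torsion ℤ (A i)).mkQ x ∈ cobounds (dtf d) i) :
    ∃ c : ℤ, c ≠ 0 ∧ c • x ∈ cobounds d i := by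
  match i with
  | 0 =>
    have hx0 : (torsion ℤ (A 0)).mkQ x = 0 := hx
    rw [Submodule.mkQ_apply, Submodule.Quotient.mk_eq_zero] at hx0
    obtain ⟨c, hc⟩ := hx0
    exact ⟨c, nonZeroDivisors.coe_ne_zero c, hc⟩
  | (j + 1) =>
    obtain ⟨z, hz⟩ := hx
    obtain ⟨y, rfl⟩ := Submodule.mkQ_surjective _ z
    have hy : (torsion ℤ (A (j + 1))).mkQ (x - d j y) = 0 := by
      rw [map_sub, ← hz, sub_eq_zero]
      exact (LinearMap.congr_fun (pi_comm d j) y).symm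
    rw [Submodule.mkQ_apply, Submodule.Quotient.mk_eq_zero] at hy
    obtain ⟨c, hc⟩ := hy
    have hc' : (c : ℤ) • (x - d j y) = 0 := hc
    refine ⟨c, nonZeroDivisors.coe_ne_zero c, (c : ℤ) • y, ?_⟩
    rw [map_smul]
    rw [smul_sub, sub_eq_zero] at hc'
    exact hc'.symm

/-- Let `(A, d)` be a cochain complex of abelian groups indexed by `ℕ`, with differentials
`d i : A i → A (i+1)`.  Let `(A_f, d_f)` be the quotient complex whose `i`-th term is
`A i / T(A i)` with the induced differential, and let `π : A → A_f` be the degreewise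
quotient map of complexes.  Then for every `i`, the homomorphism
`π' : H^i(A)_f → H^i(A_f)_f` induced on torsion-free quotients of cohomology by
`π* : H^i(A) → H^i(A_f)` is injective. -/
theorem stmt4 (A : ℕ → Type) [∀ i, AddCommGroup (A i)]
    (d : ∀ i, A i →ₗ[ℤ] A (i + 1)) (hd : ∀ i, d (i + 1) ∘ₗ d i = 0) (i : ℕ)
    (π' : (cohomology d i ⧸ torsion ℤ (cohomology d i)) →ₗ[ℤ]
      (cohomology (dtf d) i ⧸ torsion ℤ (cohomology (dtf d) i)))
    (hπ' : π' ∘ₗ (torsion ℤ (cohomology d i)).mkQ =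
      (torsion ℤ (cohomology (dtf d) i)).mkQ ∘ₗ
        cohomologyMap d (dtf d) (fun j => (torsion ℤ (A j)).mkQ)
          (fun j => (pi_comm d j).symm) i) :
    Function.Injective π' := by
  rw [injective_iff_map_eq_zero]
  intro u hu
  obtain ⟨v, rfl⟩ := Submodule.mkQ_surjective _ u
  obtain ⟨x, rfl⟩ := Submodule.mkQ_surjective _ v
  have h := LinearMap.congr_fun hπ' (Submodule.mkQ _ x)
  simp only [LinearMap.comp_apply] at h
  rw [hu, eq_comm, Submodule.mkQ_apply (torsion ℤ (cohomology (dtf d) i)),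
    Submodule.Quotient.mk_eq_zero] at h
  obtain ⟨c, hc, hcx⟩ := (mk_mem_torsion_cohomology_iff (dtf d) i
    ((torsion ℤ (A i)).mkQ.restrict
      (map_cocycles (f := fun j => (torsion ℤ (A j)).mkQ)
        (fun j => pi_comm d j) i) x)).1 h
  have hcx' : (torsion ℤ (A i)).mkQ (c • (x : A i)) ∈ cobounds (dtf d) i := by
    rw [map_smul]
    exact hcx
  obtain ⟨c', hc', hcx''⟩ := exists_smul_mem_cobounds d i _ hcx'
  rw [smul_smul] at hcx''
  rw [Submodule.mkQ_apply (torsion ℤ (cohomology d i)), Submodule.Quotient.mk_eq_zero]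
  exact (mk_mem_torsion_cohomology_iff d i x).2 ⟨c' * c, mul_ne_zero hc' hc, hcx''⟩
end

section
/- Let R = ℤ[x_1, …, x_n] be the polynomial ring over ℤ, graded by assigning each variable x_i a positive degree d_i > 0 (and ℤ-coefficients degree 0), and let M be a nonnegatively graded R-module (M = ⊕_{j≥0} M_j with x_i·M_j ⊆ M_{j+d_i}). If M/(x_1, …, x_n)M is a free ℤ-module and {x_1, …, x_n} is an M-regular sequence, then M is a free R-module. -/
/-!
Write `I = (x_1, …, x_n)`, let `π : M → M/IM` be the quotient map and `b` a `ℤ`-basis of `M/IM`.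

*Homogeneous lifting.* Starting from any additive section `σ` of `π`, the degree-preserving map
`t = ∑ⱼ pⱼ ∘ σ ∘ π ∘ pⱼ` (with `pⱼ` the projection onto degree `j`) kills `IM` and satisfies
`π ∘ t = π`, because `IM` is a homogeneous submodule. The elements `v a = t (σ (b a))` lift the
basis `b`; they need not be homogeneous, but `t` maps all of `M` into their span.

*Generation* (`exists_lift`). For homogeneous `m` of degree `j`, the element `m - t m` is of degree
`j` and lies in `IM`, hence is a combination of elements `x_i • y` with `y` of smaller degree, so
graded Nakayama (strong induction on `j`) shows that the `v a` span `M`.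

*Independence* (`coeff_mem_of_mem`). With `I_k = (x_1, …, x_k)`, descending induction on `k` shows
that `∑ f_a • v a ∈ I_k M` forces all `f_a ∈ I_k`. For `k = n` this is the independence of `b`. For
the step, each `f_a` is divided by `x_{k+1}`; the remainders lie in `I_k`, regularity of `x_{k+1}`
on `M/I_k M` shows that the quotients satisfy the same hypothesis, and they have smaller degree in
`x_{k+1}`. The case `k = 0` is linear independence.
-/

open MvPolynomial

namespace GradedFree

open DirectSum

variable {n : ℕ}

/-! ### The ideals generated by initial variables -/

/-- The ideal generated by the first `k` variables. -/
noncomputable def firstVars (n k : ℕ) : Ideal (MvPolynomial (Fin n) ℤ) :=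
  Ideal.span (X '' {i : Fin n | i.val < k})

lemma mem_firstVars {k : ℕ} {p : MvPolynomial (Fin n) ℤ} :
    p ∈ firstVars n k ↔ ∀ d ∈ p.support, ∃ i : Fin n, i.val < k ∧ d i ≠ 0 := by
  rw [firstVars, mem_ideal_span_X_image]
  rfl

lemma firstVars_self (n : ℕ) :
    firstVars n n = Ideal.span (Set.range (X : Fin n → MvPolynomial (Fin n) ℤ)) := by
  have : {i : Fin n | i.val < n} = Set.univ := by ext i; simp
  rw [firstVars, this, Set.image_univ]

lemma ofList_take (n k : ℕ) :
    Ideal.ofList ((List.ofFn (X : Fin n → MvPolynomial (Fin n) ℤ)).take k) = firstVars n k := by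
  rw [Ideal.ofList, firstVars]
  congr 1
  ext p
  simp only [Set.mem_ofPred_eq, List.mem_take_iff_getElem, List.getElem_ofFn, List.length_ofFn,
    Set.mem_image]
  constructor
  · rintro ⟨i, hi, rfl⟩
    exact ⟨⟨i, by omega⟩, by simp; omega, rfl⟩
  · rintro ⟨i, hi, rfl⟩
    exact ⟨i, by have : i.val < k := hi; omega, rfl⟩

lemma mem_firstVars_zero {p : MvPolynomial (Fin n) ℤ} : p ∈ firstVars n 0 ↔ p = 0 := by
  simp [firstVars]

section Module

variable {M : Type} [AddCommGroup M] [Module (MvPolynomial (Fin n) ℤ) M]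

/-! ### Independence modulo the regular sequence -/

lemma regular_step (hreg : RingTheory.Sequence.IsRegular M
      (List.ofFn (X : Fin n → MvPolynomial (Fin n) ℤ))) (k : Fin n) (m : M)
    (hm : (X k : MvPolynomial (Fin n) ℤ) • m ∈
      firstVars n k • (⊤ : Submodule (MvPolynomial (Fin n) ℤ) M)) :
    m ∈ firstVars n k • (⊤ : Submodule (MvPolynomial (Fin n) ℤ) M) := by
  have h := hreg.toIsWeaklyRegular.regular_mod_prev k.val (by simp)
  rw [ofList_take] at h
  simp only [List.getElem_ofFn, Fin.eta] at h
  rw [← Submodule.Quotient.mk_eq_zero] at hm ⊢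
  exact h (by simpa using hm)

/-- The coefficients of a combination lying in `I_k M` lie in `I_k`, provided this holds for
`k = n`: descending induction on `k` through the regular sequence. -/
lemma coeff_mem_of_mem {ι : Type} (hreg : RingTheory.Sequence.IsRegular M
      (List.ofFn (X : Fin n → MvPolynomial (Fin n) ℤ))) (v : ι → M)
    (htop : ∀ f : ι →₀ MvPolynomial (Fin n) ℤ,
      Finsupp.linearCombination _ v f ∈
        firstVars n n • (⊤ : Submodule (MvPolynomial (Fin n) ℤ) M) → ∀ a, f a ∈ firstVars n n)
    {k : ℕ} (hk : k ≤ n) :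
    ∀ f : ι →₀ MvPolynomial (Fin n) ℤ,
      Finsupp.linearCombination _ v f ∈
        firstVars n k • (⊤ : Submodule (MvPolynomial (Fin n) ℤ) M) →
      ∀ a, f a ∈ firstVars n k := by
  induction hk using Nat.decreasingInduction with
  | self => exact htop
  | of_succ k hk ih =>
    set κ : Fin n := ⟨k, hk⟩ with hκ
    -- Induction on a strict bound `N` for the degrees in `X κ`.
    suffices H : ∀ N : ℕ, ∀ f : ι →₀ MvPolynomial (Fin n) ℤ,
        (∀ a, ∀ d ∈ (f a).support, d κ < N) →
        Finsupp.linearCombination _ v f ∈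
          firstVars n k • (⊤ : Submodule (MvPolynomial (Fin n) ℤ) M) →
        ∀ a, f a ∈ firstVars n k by
      intro f hf
      refine H ((f.support.sup fun a => (f a).support.sup fun d => d κ) + 1) f ?_ hf
      intro a d hd
      have ha : a ∈ f.support := by
        rw [Finsupp.mem_support_iff]
        rintro h
        simp [h] at hd
      exact Nat.lt_succ_of_le ((Finset.le_sup (f := fun d : Fin n →₀ ℕ => d κ) hd).trans
        (Finset.le_sup (f := fun a => (f a).support.sup fun d => d κ) ha))
    intro N
    induction N with
    | zero =>
      intro f hN _ a
      rw [mem_firstVars]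
      intro d hd
      exact absurd (hN a d hd) (by omega)
    | succ N IH =>
      intro f hN hf
      set h : ι →₀ MvPolynomial (Fin n) ℤ :=
        f.mapRange (fun p => p.divMonomial (Finsupp.single κ 1)) (zero_divMonomial _) with hh
      have hle : firstVars n k ≤ firstVars n (k + 1) :=
        Ideal.span_mono (Set.image_mono fun i (hi : i.val < k) => Nat.lt_succ_of_lt hi)
      have hsucc := ih f (Submodule.smul_mono_left hle hf)
      have hrem : ∀ a, f a - X κ * h a ∈ firstVars n k := by
        intro a
        have e : f a - X κ * h a = (f a).modMonomial (Finsupp.single κ 1) := by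
          rw [sub_eq_iff_eq_add]
          exact ((f a).modMonomial_add_divMonomial_single κ).symm
        rw [e, mem_firstVars]
        intro d hd
        rw [mem_support_iff] at hd
        have h1 : ¬ Finsupp.single κ 1 ≤ d := fun hle => hd (coeff_modMonomial_of_le _ hle)
        rw [coeff_modMonomial_of_not_le _ h1] at hd
        obtain ⟨i, hi, hdi⟩ := mem_firstVars.1 (hsucc a) d (mem_support_iff.2 hd)
        refine ⟨i, ?_, hdi⟩
        rcases Nat.lt_succ_iff_lt_or_eq.1 hi with hi | hi
        · exact hi
        · exfalso
          have : i = κ := Fin.ext hi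
          subst this
          exact h1 (Finsupp.single_le_iff.2 (Nat.one_le_iff_ne_zero.2 hdi))
      have hphi : Finsupp.linearCombination _ v h ∈
          firstVars n k • (⊤ : Submodule (MvPolynomial (Fin n) ℤ) M) := by
        refine regular_step hreg κ _ ?_
        have h2 : Finsupp.linearCombination _ v (f - (X κ : MvPolynomial (Fin n) ℤ) • h) ∈
            firstVars n k • (⊤ : Submodule (MvPolynomial (Fin n) ℤ) M) := by
          rw [Finsupp.linearCombination_apply]
          refine Submodule.sum_mem _ fun a _ => Submodule.smul_mem_smul ?_ trivial
          simpa using hrem a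
        have h3 := Submodule.sub_mem _ hf h2
        rwa [← map_sub, sub_sub_cancel, map_smul] at h3
      have hmem := IH h (by
        intro a d hd
        rw [mem_support_iff, hh, Finsupp.mapRange_apply, coeff_divMonomial] at hd
        have := hN a _ (mem_support_iff.2 hd)
        simp at this
        omega) hphi
      intro a
      have := Ideal.add_mem _ (hrem a) (Ideal.mul_mem_left _ (X κ) (hmem a))
      simpa using this

lemma mk_smul (p : MvPolynomial (Fin n) ℤ) (m : M) :
    (Submodule.Quotient.mk (p • m) :
      M ⧸ (firstVars n n • (⊤ : Submodule (MvPolynomial (Fin n) ℤ) M))) =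
      constantCoeff p • Submodule.Quotient.mk m := by
  have h : p - C (constantCoeff p) ∈ firstVars n n := by
    rw [mem_firstVars]
    intro d hd
    by_contra! hc
    have : d = 0 := Finsupp.ext fun i => hc i i.isLt
    subst this
    rw [mem_support_iff] at hd
    exact hd (by rw [coeff_sub, coeff_C, if_pos rfl, constantCoeff_eq, sub_self])
  have h2 : p • m - constantCoeff p • m ∈
      firstVars n n • (⊤ : Submodule (MvPolynomial (Fin n) ℤ) M) := by
    have : p • m - constantCoeff p • m = (p - C (constantCoeff p)) • m := by
      rw [sub_smul]
      congr 1
      rw [← Int.cast_smul_eq_zsmul (MvPolynomial (Fin n) ℤ)]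
      simp
    rw [this]
    exact Submodule.smul_mem_smul h trivial
  exact (Submodule.Quotient.eq _).2 h2

/-- Base case of the descending induction: lifts of a `ℤ`-basis are independent modulo `I`. -/
lemma coeff_mem_top {ι : Type}
    (b : Module.Basis ι ℤ (M ⧸ (firstVars n n • (⊤ : Submodule (MvPolynomial (Fin n) ℤ) M))))
    (v : ι → M) (hv : ∀ a, Submodule.Quotient.mk (v a) = b a)
    (f : ι →₀ MvPolynomial (Fin n) ℤ)
    (hf : Finsupp.linearCombination _ v f ∈
      firstVars n n • (⊤ : Submodule (MvPolynomial (Fin n) ℤ) M)) (a : ι) :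
    f a ∈ firstVars n n := by
  have h0 : Finsupp.linearCombination ℤ b
      (f.mapRange (constantCoeff : MvPolynomial (Fin n) ℤ →+* ℤ) (map_zero _)) = 0 := by
    rw [← Submodule.Quotient.mk_eq_zero, Finsupp.linearCombination_apply, Finsupp.sum,
      ← Submodule.mkQ_apply, map_sum] at hf
    rw [Finsupp.linearCombination_apply, Finsupp.sum_mapRange_index (by simp), Finsupp.sum, ← hf]
    refine Finset.sum_congr rfl fun a _ => ?_
    rw [Submodule.mkQ_apply, mk_smul, hv]
  have h1 := DFunLike.congr_fun (linearIndependent_iff.1 b.linearIndependent _ h0) a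
  rw [Finsupp.mapRange_apply] at h1
  rw [mem_firstVars]
  intro d hd
  by_contra! hc
  have : d = 0 := Finsupp.ext fun i => hc i i.isLt
  subst this
  exact (mem_support_iff.1 hd) (by simpa [constantCoeff_eq] using h1)

/-! ### Homogeneous lifting and graded Nakayama -/

variable (w : Fin n → ℕ) (ℳ : ℕ → AddSubgroup M) [DirectSum.Decomposition ℳ]

/-- The projection onto the component of degree `j`. -/
def proj (j : ℕ) : M →+ M where
  toFun m := (decompose ℳ m j : M)
  map_zero' := by simp
  map_add' x y := by simp

lemma proj_same {j : ℕ} {m : M} (hm : m ∈ ℳ j) : proj ℳ j m = m :=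
  decompose_of_mem_same ℳ hm

lemma proj_mem (j : ℕ) (m : M) : proj ℳ j m ∈ ℳ j := (decompose ℳ m j).2

/-- The component of degree `j` of an element of `I M` is a sum of terms `x_i • y` with `y`
homogeneous of degree `j - w i`; this is phrased through an arbitrary subgroup `Q` containing all
such terms. -/
lemma proj_mem_of_mem_smul [SetLike.GradedSMul (weightedHomogeneousSubmodule ℤ w) ℳ]
    (j : ℕ) (Q : AddSubgroup M)
    (hQ : ∀ i l, w i + l = j → ∀ y ∈ ℳ l, (X i : MvPolynomial (Fin n) ℤ) • y ∈ Q)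
    {m : M} (hm : m ∈ firstVars n n • (⊤ : Submodule (MvPolynomial (Fin n) ℤ) M)) :
    proj ℳ j m ∈ Q := by
  induction hm using Submodule.smul_induction_on' with
  | smul r hr m _ =>
    rw [firstVars_self] at hr
    induction hr using Submodule.span_induction generalizing m with
    | mem x hx =>
      obtain ⟨i, rfl⟩ := hx
      induction m using DirectSum.Decomposition.inductionOn ℳ with
      | zero => simp
      | @homogeneous l m =>
        have hX : (X i : MvPolynomial (Fin n) ℤ) • (m : M) ∈ ℳ (w i + l) :=
          SetLike.GradedSMul.smul_mem (A := weightedHomogeneousSubmodule ℤ w)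
            (isWeightedHomogeneous_X ℤ w i) m.2
        by_cases h : w i + l = j
        · rw [proj_same ℳ (h ▸ hX)]
          exact hQ i l h _ m.2
        · have : proj ℳ j ((X i : MvPolynomial (Fin n) ℤ) • (m : M)) = 0 :=
            decompose_of_mem_ne ℳ hX h
          rw [this]
          exact Q.zero_mem
      | add x y hx hy =>
        rw [smul_add, map_add]
        exact Q.add_mem (hx trivial) (hy trivial)
    | zero => simp
    | add x y _ _ hx hy =>
      rw [add_smul, map_add]
      exact Q.add_mem (hx m trivial) (hy m trivial)
    | smul c x _ hx =>
      rw [smul_eq_mul, mul_comm, mul_smul]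
      exact hx _ trivial
  | add x _ y _ hx hy =>
    rw [map_add]
    exact Q.add_mem hx hy

/-- `I M` is a homogeneous submodule. -/
lemma proj_mem_smul [SetLike.GradedSMul (weightedHomogeneousSubmodule ℤ w) ℳ] (j : ℕ)
    {m : M} (hm : m ∈ firstVars n n • (⊤ : Submodule (MvPolynomial (Fin n) ℤ) M)) :
    proj ℳ j m ∈ firstVars n n • (⊤ : Submodule (MvPolynomial (Fin n) ℤ) M) := by
  refine proj_mem_of_mem_smul w ℳ j
    (firstVars n n • (⊤ : Submodule (MvPolynomial (Fin n) ℤ) M)).toAddSubgroup ?_ hm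
  intro i l _ y _
  exact Submodule.smul_mem_smul (Ideal.subset_span ⟨i, i.isLt, rfl⟩) trivial

/-- Every `ℤ`-basis of `M / I M` lifts to a generating family of `M`. -/
lemma exists_lift (hw : ∀ i, 0 < w i)
    [SetLike.GradedSMul (weightedHomogeneousSubmodule ℤ w) ℳ] {ι : Type}
    (IM : Submodule (MvPolynomial (Fin n) ℤ) M) (hIM : IM = firstVars n n • ⊤)
    (b : Module.Basis ι ℤ (M ⧸ IM)) :
    ∃ v : ι → M, (∀ a, Submodule.Quotient.mk (v a) = b a) ∧
      Submodule.span (MvPolynomial (Fin n) ℤ) (Set.range v) = ⊤ := by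
  have hproj : ∀ j, ∀ m ∈ IM, proj ℳ j m ∈ IM := by
    subst hIM
    exact fun j m hm => proj_mem_smul w ℳ j hm
  let π : M →+ M ⧸ IM := IM.mkQ.toAddMonoidHom
  have hπ0 : ∀ m, π m = 0 ↔ m ∈ IM := fun m => Submodule.Quotient.mk_eq_zero IM
  let σ : (M ⧸ IM) →ₗ[ℤ] M := b.constr ℤ fun a => (b a).out
  have hσ : ∀ q, π (σ q) = q := by
    have : (π.toIntLinearMap.comp σ) = LinearMap.id := by
      refine b.ext fun a => ?_
      simp only [LinearMap.comp_apply, σ, b.constr_basis, LinearMap.id_apply]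
      exact Quotient.out_eq (b a)
    exact fun q => LinearMap.congr_fun this q
  -- The degree-preserving map `∑ⱼ pⱼ ∘ σ ∘ π ∘ pⱼ`.
  let t : M →+ M := (DirectSum.toAddMonoid fun j =>
      (proj ℳ j).comp (σ.toAddMonoidHom.comp (π.comp (ℳ j).subtype))).comp
    (decomposeAddEquiv ℳ).toAddMonoidHom
  have ht : ∀ j, ∀ m ∈ ℳ j, t m = proj ℳ j (σ (π m)) := by
    intro j m hm
    simp [t, decompose_of_mem ℳ hm]
  have hres : ∀ m, m - σ (π m) ∈ IM := by
    intro m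
    rw [← hπ0, map_sub, hσ, sub_self]
  have hsub : ∀ m, t m - m ∈ IM := by
    intro m
    induction m using DirectSum.Decomposition.inductionOn ℳ with
    | zero => simp
    | @homogeneous j m =>
      have h := IM.neg_mem (hproj j _ (hres (m : M)))
      rw [map_sub, proj_same ℳ m.2, neg_sub] at h
      rwa [ht j m m.2]
    | add x y hx hy =>
      rw [map_add, add_sub_add_comm]
      exact IM.add_mem hx hy
  have hkill : ∀ m ∈ IM, t m = 0 := by
    intro m hm
    classical
    rw [← DirectSum.sum_support_decompose ℳ m, map_sum]
    refine Finset.sum_eq_zero fun j _ => ?_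
    have h0 : π (decompose ℳ m j : M) = 0 := (hπ0 _).2 (hproj j m hm)
    rw [ht j _ (decompose ℳ m j).2, h0, map_zero, map_zero]
  refine ⟨fun a => t (σ (b a)), fun a => ?_, ?_⟩
  · have h := (hπ0 _).2 (hsub (σ (b a)))
    rw [map_sub, hσ, sub_eq_zero] at h
    exact h
  set N := Submodule.span (MvPolynomial (Fin n) ℤ) (Set.range fun a => t (σ (b a))) with hN
  have htN : ∀ m, t m ∈ N := by
    intro m
    have e : t m = t (σ (π m)) := by
      rw [← sub_eq_zero, ← map_sub]
      exact hkill _ (hres m)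
    rw [e]
    rw [← b.linearCombination_repr (π m), Finsupp.linearCombination_apply, Finsupp.sum,
      map_sum, map_sum]
    refine N.sum_mem fun a _ => ?_
    rw [map_zsmul, map_zsmul]
    have ha : t (σ (b a)) ∈ N := Submodule.subset_span ⟨a, rfl⟩
    exact zsmul_mem ha _
  -- Graded Nakayama.
  have hhom : ∀ j, ∀ m ∈ ℳ j, m ∈ N := by
    intro j
    induction j using Nat.strong_induction_on with
    | _ j IH =>
      intro m hm
      have h1 : proj ℳ j (t m - m) ∈ N := by
        refine proj_mem_of_mem_smul w ℳ j N.toAddSubgroup ?_ (hIM ▸ hsub m)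
        intro i l hl y hy
        have := hw i
        exact N.smul_mem _ (IH l (by omega) y hy)
      have htm : t m ∈ ℳ j := by
        rw [ht j m hm]
        exact proj_mem ℳ j _
      rw [proj_same ℳ ((ℳ j).sub_mem htm hm)] at h1
      exact (Submodule.sub_mem_iff_right _ (htN m)).1 h1
  rw [eq_top_iff]
  intro m _
  induction m using DirectSum.Decomposition.inductionOn ℳ with
  | zero => exact N.zero_mem
  | @homogeneous j m => exact hhom j m m.2
  | add x y hx hy => exact N.add_mem (hx trivial) (hy trivial)

end Module

end GradedFree

/-- Let `R = ℤ[x_1, …, x_n]` be the polynomial ring over `ℤ`, graded by assigning each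
variable `x_i` a positive degree `w i > 0` (and `ℤ`-coefficients degree `0`), and let
`M` be a nonnegatively graded `R`-module.  If `M/(x_1, …, x_n)M` is a free `ℤ`-module
and `x_1, …, x_n` is an `M`-regular sequence, then `M` is a free `R`-module. -/
theorem stmt7 {n : ℕ} (w : Fin n → ℕ) (hw : ∀ i, 0 < w i)
    {M : Type} [AddCommGroup M] [Module (MvPolynomial (Fin n) ℤ) M]
    (ℳ : ℕ → AddSubgroup M) [DirectSum.Decomposition ℳ]
    [SetLike.GradedSMul (weightedHomogeneousSubmodule ℤ w) ℳ]
    (hfree : Module.Free ℤ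
      (M ⧸ (Ideal.span (Set.range (X : Fin n → MvPolynomial (Fin n) ℤ)) •
        (⊤ : Submodule (MvPolynomial (Fin n) ℤ) M))))
    (hreg : RingTheory.Sequence.IsRegular M
      (List.ofFn (X : Fin n → MvPolynomial (Fin n) ℤ))) :
    Module.Free (MvPolynomial (Fin n) ℤ) M := by
  rw [← GradedFree.firstVars_self] at hfree
  let b := Module.Free.chooseBasis ℤ
    (M ⧸ (GradedFree.firstVars n n • (⊤ : Submodule (MvPolynomial (Fin n) ℤ) M)))
  obtain ⟨v, hv, hspan⟩ := GradedFree.exists_lift w ℳ hw _ rfl b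
  have hli : LinearIndependent (MvPolynomial (Fin n) ℤ) v := by
    rw [linearIndependent_iff]
    intro f hf
    ext1 a
    exact GradedFree.mem_firstVars_zero.1 <|
      GradedFree.coeff_mem_of_mem hreg v (GradedFree.coeff_mem_top b v hv) (Nat.zero_le n) f
        (hf ▸ Submodule.zero_mem _) a
  exact Module.Free.of_basis (Module.Basis.mk hli hspan.ge)
end
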